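/- For all natural numbers m,n with m,n ∉ {1,2}, the integral ∫_ℝ Ĥ_m(x)·Ĥ_n(x)·e^{−x²}/(1+2x²)² dx equals √π·2ⁿ·n!/((n−1)(n−2)) if m = n, and equals 0 if m ≠ n. -/

import Mathlib

/-- Physicists' Hermite polynomials via the Rodrigues formula. -/
noncomputable def Hr (n : ℕ) (x : ℝ) : ℝ :=
  (-1) ^ n * Real.exp (x ^ 2) * iteratedDeriv n (fun t => Real.exp (-t ^ 2)) x

/-- The function Ĥₙ. -/
noncomputable def Hhatr (n : ℕ) (x : ℝ) : ℝ :=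
  Hr n x + 4 * (n : ℝ) * Hr (n - 2) x + 4 * (n : ℝ) * ((n : ℝ) - 3) * Hr (n - 4) x

/-!
Write `w = exp (-x²)`, `η = 1 + 2x²` and `A y = η y'' - η' y' + η'' y`. Up to a constant factor,
`A y` is the Wronskian of `H₁`, `H₂` and `y`, and the three-term recurrence gives
`A Hₙ = 2(n-1)(n-2) Ĥₙ`. The operator `A` is formally self-adjoint for `dx / η²`, because
`v A p - p A v = η² ((p' v - p v') / η)'`. Taking `v = w A q` and integrating,
`∫ (A p) (A q) w / η² = ∫ p A(w A q) / η²`. Finally `A (w A q) = η² w (D - 2) (D - 4) q`, where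
`D y = 2x y' - y''` is the Hermite operator and `D Hₙ = 2n Hₙ`. The claim is thereby reduced to the
orthogonality of the Hermite polynomials.
-/

section Algebra

open Polynomial

variable {R : Type*} [CommRing R]

/-- The raising operator `p ↦ 2Xp - p'`, the adjoint of differentiation for the weight `exp (-x²)`;
equivalently, `(p exp (-x²))' = -(hermiteRaise p) exp (-x²)`. -/
noncomputable def hermiteRaise (p : R[X]) : R[X] :=
  2 * X * p - derivative p

/-- The Hermite differential operator `D p = 2X p' - p''`, written as the adjoint of differentiation
composed with differentiation. -/
noncomputable def hermiteOp (p : R[X]) : R[X] :=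
  hermiteRaise (derivative p)

/-- The physicists' Hermite polynomials, as formal polynomials generated by the raising operator;
`Polynomial.hermite` is the probabilists' normalization. -/
noncomputable def physHermite : ℕ → R[X]
  | 0 => 1
  | n + 1 => hermiteRaise (physHermite n)

/-- The polynomial version of `Hhatr`: the exceptional Hermite polynomials obtained from the seed
functions `H₁` and `H₂`. The truncated subtractions matter only for `n = 1` and `n = 2`. -/
noncomputable def exceptionalHermite (n : ℕ) : R[X] :=
  physHermite n + 4 * (n : R[X]) * physHermite (n - 2)
    + 4 * (n : R[X]) * ((n : R[X]) - 3) * physHermite (n - 4)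

/-- The second-order Darboux operator `A p = η p'' - η' p' + η'' p` with `η = 1 + 2X²`, which is a
quarter of the Wronskian of `H₁`, `H₂` and `p`. -/
noncomputable def darboux (p : R[X]) : R[X] :=
  (1 + 2 * X ^ 2) * derivative (derivative p) - 4 * X * derivative p + 4 * p

/-- The Darboux operator conjugated by the Gaussian: `exp (x²) A (exp (-x²) p)`. -/
noncomputable def darbouxConj (p : R[X]) : R[X] :=
  (1 + 2 * X ^ 2) * hermiteRaise (hermiteRaise p) + 4 * X * hermiteRaise p + 4 * p

@[simp]
lemma physHermite_zero : (physHermite 0 : R[X]) = 1 := rfl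

lemma physHermite_succ (n : ℕ) : (physHermite (n + 1) : R[X]) = hermiteRaise (physHermite n) := rfl

lemma derivative_hermiteRaise (p : R[X]) :
    derivative (hermiteRaise p) = 2 * p + hermiteRaise (derivative p) := by
  simp only [hermiteRaise, derivative_sub, derivative_mul, derivative_ofNat, derivative_X]
  ring

lemma hermiteRaise_mul (p q : R[X]) :
    hermiteRaise (p * q) = hermiteRaise p * q - p * derivative q := by
  simp only [hermiteRaise, derivative_mul]
  ring

lemma derivative_physHermite_succ (n : ℕ) :
    derivative (physHermite (n + 1) : R[X]) = 2 * ((n : R[X]) + 1) * physHermite n := by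
  induction n with
  | zero => simp [physHermite_succ, hermiteRaise]
  | succ n ih =>
    have raise_deriv : hermiteRaise (2 * ((n : R[X]) + 1) * physHermite n)
        = 2 * ((n : R[X]) + 1) * physHermite (n + 1) := by
      rw [mul_comm, hermiteRaise_mul, physHermite_succ]
      simp [mul_comm]
    rw [physHermite_succ (n + 1), derivative_hermiteRaise, ih, raise_deriv]
    push_cast
    ring

lemma derivative_physHermite (n : ℕ) :
    derivative (physHermite n : R[X]) = 2 * (n : R[X]) * physHermite (n - 1) := by
  cases n with
  | zero => simp
  | succ n => simpa using derivative_physHermite_succ n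

lemma two_mul_X_mul_physHermite (n : ℕ) :
    2 * X * (physHermite n : R[X])
      = physHermite (n + 1) + 2 * (n : R[X]) * physHermite (n - 1) := by
  rw [physHermite_succ, hermiteRaise, derivative_physHermite]
  ring

lemma four_mul_X_sq_mul_physHermite (n : ℕ) :
    4 * X ^ 2 * (physHermite n : R[X])
      = physHermite (n + 2) + (4 * (n : R[X]) + 2) * physHermite n
        + 4 * (n : R[X]) * ((n : R[X]) - 1) * physHermite (n - 2) := by
  have mul_X_n := two_mul_X_mul_physHermite (R := R) n
  have mul_X_succ := two_mul_X_mul_physHermite (R := R) (n + 1)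
  cases n with
  | zero =>
    simp only [Nat.cast_zero, Nat.cast_one, zero_add, tsub_self] at mul_X_n mul_X_succ ⊢
    linear_combination 2 * X * mul_X_n + mul_X_succ
  | succ n =>
    have mul_X_pred := two_mul_X_mul_physHermite (R := R) n
    simp only [Nat.add_sub_cancel, Nat.cast_add, Nat.cast_one, Nat.reduceSubDiff]
      at mul_X_n mul_X_succ ⊢
    linear_combination 2 * X * mul_X_n + mul_X_succ + 2 * (n + 1) * mul_X_pred

lemma hermiteOp_physHermite (n : ℕ) :
    hermiteOp (physHermite n : R[X]) = 2 * (n : R[X]) * physHermite n := by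
  have raise := derivative_hermiteRaise (physHermite n : R[X])
  rw [← physHermite_succ, derivative_physHermite_succ] at raise
  rw [hermiteOp]
  linear_combination -raise

lemma hermiteOp_hermiteOp_physHermite (n : ℕ) :
    hermiteOp (hermiteOp (physHermite n : R[X])) = (2 * (n : R[X])) ^ 2 * physHermite n := by
  have deriv_op : derivative (hermiteOp (physHermite n : R[X]))
      = derivative (physHermite n) * (2 * (n : R[X])) := by
    simp [hermiteOp_physHermite, mul_comm]
  have deriv_const : derivative (2 * (n : R[X])) = 0 := by simp
  rw [hermiteOp, deriv_op, hermiteRaise_mul, deriv_const, ← hermiteOp, hermiteOp_physHermite]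
  ring

lemma darboux_physHermite (n : ℕ) :
    darboux (physHermite n : R[X])
      = 2 * ((n : R[X]) - 1) * ((n : R[X]) - 2) * exceptionalHermite n := by
  match n with
  | 0 =>
    simp only [darboux, exceptionalHermite, physHermite_zero, derivative_one, derivative_zero,
      Nat.cast_zero]
    ring
  | 1 =>
    simp only [darboux, physHermite_succ, hermiteRaise, physHermite_zero, derivative_add,
      derivative_sub, derivative_mul, derivative_X, derivative_one, derivative_ofNat,
      derivative_zero, Nat.cast_one]
    ring
  | n + 2 =>
    have deriv_two : derivative (derivative (physHermite (n + 2) : R[X]))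
        = 4 * ((n : R[X]) + 2) * ((n : R[X]) + 1) * physHermite n := by
      simp only [derivative_physHermite_succ, derivative_mul, derivative_add, derivative_natCast,
        derivative_ofNat, derivative_one]
      push_cast
      ring
    have mul_X := two_mul_X_mul_physHermite (R := R) (n + 1)
    have mul_X_sq := four_mul_X_sq_mul_physHermite (R := R) n
    rw [darboux, deriv_two, derivative_physHermite_succ, exceptionalHermite]
    simp only [Nat.add_sub_cancel, Nat.reduceSubDiff, Nat.cast_add, Nat.cast_ofNat,
      Nat.cast_one] at mul_X mul_X_sq ⊢
    linear_combination 2 * (n + 2) * (n + 1) * mul_X_sq - 4 * (n + 2) * mul_X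

lemma darbouxConj_darboux (p : R[X]) :
    darbouxConj (darboux p)
      = (1 + 2 * X ^ 2) ^ 2 * (hermiteOp (hermiteOp p) - 6 * hermiteOp p + 8 * p) := by
  simp only [darbouxConj, darboux, hermiteOp, hermiteRaise, derivative_add, derivative_sub,
    derivative_mul, derivative_X, derivative_ofNat, derivative_one, derivative_zero, sq]
  ring

end Algebra

section Gaussian

open Polynomial MeasureTheory Real

lemma hasDerivAt_eval_mul_exp_neg_sq (p : ℝ[X]) (x : ℝ) :
    HasDerivAt (fun t ↦ p.eval t * exp (-t ^ 2)) (-((hermiteRaise p).eval x * exp (-x ^ 2))) x := by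
  have gaussian := ((hasDerivAt_pow 2 x).fun_neg).exp
  refine ((p.hasDerivAt x).mul gaussian).congr_deriv ?_
  simp only [hermiteRaise, eval_sub, eval_mul, eval_ofNat, eval_X, Nat.cast_ofNat]
  ring

lemma iteratedDeriv_exp_neg_sq (n : ℕ) :
    iteratedDeriv n (fun t : ℝ ↦ exp (-t ^ 2))
      = fun x ↦ (-1) ^ n * ((physHermite n).eval x * exp (-x ^ 2)) := by
  induction n with
  | zero => simp
  | succ n ih =>
    ext x
    rw [iteratedDeriv_succ, ih,
      ((hasDerivAt_eval_mul_exp_neg_sq (physHermite n) x).const_mul _).deriv, physHermite_succ]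
    ring

lemma Hr_eq_eval_physHermite (n : ℕ) (x : ℝ) : Hr n x = (physHermite n).eval x := by
  have sign : (-1 : ℝ) ^ n * (-1) ^ n = 1 := by simp [← mul_pow]
  have gaussian : exp (x ^ 2) * exp (-x ^ 2) = 1 := by simp [← exp_add]
  rw [Hr, iteratedDeriv_exp_neg_sq]
  linear_combination (physHermite n).eval x * (exp (x ^ 2) * exp (-x ^ 2) * sign + gaussian)

lemma Hhatr_eq_eval_exceptionalHermite (n : ℕ) (x : ℝ) :
    Hhatr n x = (exceptionalHermite n).eval x := by
  simp [Hhatr, exceptionalHermite, Hr_eq_eval_physHermite]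

lemma integrable_eval_mul_exp_neg_sq (p : ℝ[X]) :
    Integrable fun x ↦ p.eval x * exp (-x ^ 2) := by
  induction p using Polynomial.induction_on' with
  | add p q hp hq =>
    simp only [eval_add, add_mul]
    exact hp.add hq
  | monomial n a =>
    have power := integrable_rpow_mul_exp_neg_mul_sq one_pos
      (neg_one_lt_zero.trans_le n.cast_nonneg)
    simpa [mul_assoc] using power.const_mul a

lemma integrable_eval_mul_exp_neg_sq_div (p : ℝ[X]) {g : ℝ → ℝ} (hg : Continuous g)
    (one_le : ∀ x, 1 ≤ g x) : Integrable fun x ↦ p.eval x * exp (-x ^ 2) / g x := by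
  refine (integrable_eval_mul_exp_neg_sq p).mono ?_ (.of_forall fun x ↦ ?_)
  · exact (Continuous.div (by fun_prop) hg
      fun x ↦ (zero_lt_one.trans_le (one_le x)).ne').aestronglyMeasurable
  · rw [norm_div]
    exact div_le_self (norm_nonneg _) ((one_le x).trans (le_norm_self _))

lemma integral_hermiteRaise_mul (p q : ℝ[X]) :
    ∫ x, (hermiteRaise p * q).eval x * exp (-x ^ 2)
      = ∫ x, (p * derivative q).eval x * exp (-x ^ 2) := by
  have total := integral_eq_zero_of_hasDerivAt_of_integrable
    (hasDerivAt_eval_mul_exp_neg_sq (p * q))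
    (integrable_eval_mul_exp_neg_sq _).neg (integrable_eval_mul_exp_neg_sq _)
  simp only [hermiteRaise_mul, eval_sub, sub_mul, integral_neg, neg_eq_zero] at total
  rwa [integral_sub (integrable_eval_mul_exp_neg_sq _) (integrable_eval_mul_exp_neg_sq _),
    sub_eq_zero] at total

lemma integral_physHermite_mul_physHermite (m n : ℕ) :
    ∫ x, (physHermite m * physHermite n).eval x * exp (-x ^ 2)
      = if m = n then √π * 2 ^ n * n.factorial else 0 := by
  induction m generalizing n with
  | zero =>
    cases n with
    | zero => simpa using integral_gaussian 1
    | succ n =>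
      rw [mul_comm, physHermite_succ, integral_hermiteRaise_mul]
      simp
  | succ m ih =>
    rw [physHermite_succ, integral_hermiteRaise_mul]
    cases n with
    | zero => simp
    | succ n =>
      have pull_out (x : ℝ) :
          (physHermite m * derivative (physHermite (n + 1))).eval x * exp (-x ^ 2)
            = 2 * (n + 1) * ((physHermite m * physHermite n).eval x * exp (-x ^ 2)) := by
        rw [derivative_physHermite_succ]
        simp only [eval_mul, eval_ofNat, eval_add, eval_natCast, eval_one]
        ring
      simp only [pull_out, integral_const_mul, ih, add_left_inj, mul_ite, mul_zero]
      congr 1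
      push_cast [Nat.factorial_succ]
      ring

-- Lagrange's identity: `((p' v - p v') / η)' = (v A p - p A v) / η²` for `v = u exp (-x²)`.
lemma hasDerivAt_wronskian_div (p u : ℝ[X]) (x : ℝ) :
    HasDerivAt
      (fun t ↦ (derivative p * u + p * hermiteRaise u).eval t * exp (-t ^ 2) / (1 + 2 * t ^ 2))
      ((darboux p * u).eval x * exp (-x ^ 2) / (1 + 2 * x ^ 2) ^ 2
        - (p * darbouxConj u).eval x * exp (-x ^ 2) / (1 + 2 * x ^ 2) ^ 2) x := by
  have deriv_eta : HasDerivAt (fun t : ℝ ↦ 1 + 2 * t ^ 2) (4 * x) x :=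
    (((hasDerivAt_pow 2 x).const_mul 2).const_add 1).congr_deriv (by ring)
  have eta_ne_zero : 1 + 2 * x ^ 2 ≠ 0 := by positivity
  refine ((hasDerivAt_eval_mul_exp_neg_sq _ x).div deriv_eta eta_ne_zero).congr_deriv ?_
  rw [← sub_div]
  congr 1
  simp only [darboux, darbouxConj, hermiteRaise, derivative_add, derivative_sub, derivative_mul,
    derivative_X, derivative_ofNat, eval_add, eval_sub, eval_mul, eval_pow, eval_X, eval_ofNat,
    eval_one, eval_zero]
  ring

lemma integral_darboux_mul (p u : ℝ[X]) :
    ∫ x, (darboux p * u).eval x * exp (-x ^ 2) / (1 + 2 * x ^ 2) ^ 2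
      = ∫ x, (p * darbouxConj u).eval x * exp (-x ^ 2) / (1 + 2 * x ^ 2) ^ 2 := by
  have one_le (x : ℝ) : 1 ≤ 1 + 2 * x ^ 2 := le_add_of_nonneg_right (by positivity)
  have integrable_sq (r : ℝ[X]) :
      Integrable fun x ↦ r.eval x * exp (-x ^ 2) / (1 + 2 * x ^ 2) ^ 2 :=
    integrable_eval_mul_exp_neg_sq_div r (by fun_prop) fun x ↦ one_le_pow₀ (one_le x)
  have total := integral_eq_zero_of_hasDerivAt_of_integrable (hasDerivAt_wronskian_div p u)
    ((integrable_sq _).sub (integrable_sq _))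
    (integrable_eval_mul_exp_neg_sq_div _ (by fun_prop) one_le)
  rwa [integral_sub (integrable_sq _) (integrable_sq _), sub_eq_zero] at total

lemma integral_darboux_mul_darboux (p q : ℝ[X]) :
    ∫ x, (darboux p * darboux q).eval x * exp (-x ^ 2) / (1 + 2 * x ^ 2) ^ 2
      = ∫ x, (p * (hermiteOp (hermiteOp q) - 6 * hermiteOp q + 8 * q)).eval x
          * exp (-x ^ 2) := by
  rw [integral_darboux_mul, darbouxConj_darboux]
  congr 1 with x
  have eta_ne_zero : 1 + 2 * x ^ 2 ≠ 0 := by positivity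
  simp only [eval_mul, eval_pow, eval_add, eval_one, eval_X, eval_ofNat]
  field_simp

lemma integral_darboux_physHermite_mul (m n : ℕ) :
    ∫ x, (darboux (physHermite m) * darboux (physHermite n)).eval x * exp (-x ^ 2)
        / (1 + 2 * x ^ 2) ^ 2
      = 4 * ((n : ℝ) - 1) * (n - 2) * if m = n then √π * 2 ^ n * n.factorial else 0 := by
  rw [integral_darboux_mul_darboux, ← integral_physHermite_mul_physHermite, ← integral_const_mul,
    hermiteOp_hermiteOp_physHermite, hermiteOp_physHermite]
  congr 1 with x
  simp only [eval_mul, eval_pow, eval_add, eval_sub, eval_ofNat, eval_natCast]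
  ring

lemma integral_darboux_physHermite_mul_eq_Hhatr (m n : ℕ) :
    ∫ x, (darboux (physHermite m) * darboux (physHermite n)).eval x * exp (-x ^ 2)
        / (1 + 2 * x ^ 2) ^ 2
      = 2 * ((m : ℝ) - 1) * (m - 2) * (2 * (n - 1) * (n - 2))
        * ∫ x, Hhatr m x * Hhatr n x * exp (-x ^ 2) / (1 + 2 * x ^ 2) ^ 2 := by
  rw [← integral_const_mul]
  congr 1 with x
  simp only [darboux_physHermite, Hhatr_eq_eval_exceptionalHermite, eval_mul, eval_sub, eval_one,
    eval_ofNat, eval_natCast]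
  ring

end Gaussian

theorem stmt2 (m n : ℕ) (hm : m ∉ ({1, 2} : Set ℕ)) (hn : n ∉ ({1, 2} : Set ℕ)) :
    ∫ x : ℝ, Hhatr m x * Hhatr n x * Real.exp (-x ^ 2) / (1 + 2 * x ^ 2) ^ 2
      = if m = n then
          Real.sqrt Real.pi * 2 ^ n * (Nat.factorial n) / (((n : ℝ) - 1) * ((n : ℝ) - 2))
        else 0 := by
  have factors_ne_zero {k : ℕ} (hk : k ∉ ({1, 2} : Set ℕ)) : (k : ℝ) - 1 ≠ 0 ∧ (k : ℝ) - 2 ≠ 0 := by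
    simp only [Set.mem_insert_iff, Set.mem_singleton_iff, not_or] at hk
    exact ⟨sub_ne_zero.2 (mod_cast hk.1), sub_ne_zero.2 (mod_cast hk.2)⟩
  obtain ⟨hm1, hm2⟩ := factors_ne_zero hm
  obtain ⟨hn1, hn2⟩ := factors_ne_zero hn
  have scaled := (integral_darboux_physHermite_mul_eq_Hhatr m n).symm.trans
    (integral_darboux_physHermite_mul m n)
  have scale_ne_zero : 2 * ((m : ℝ) - 1) * (m - 2) * (2 * (n - 1) * (n - 2)) ≠ 0 := by positivity
  refine mul_left_cancel₀ scale_ne_zero (scaled.trans ?_)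
  split_ifs with hmn
  · subst hmn
    field_simp
    ring
  · simp
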